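/- For every ordinal α < 1^∞, the class {β : α ≤₁ β} has a greatest element, denoted lh(α); consequently, for all β one has α ≤₁ β if and only if α ≤ β ≤ lh(α). -/

import Mathlib

open FirstOrder

/-- The relation symbols of the language of `ℛ₂`: three binary relations. -/
inductive ordRel : ℕ → Type
  | le : ordRel 2
  | le1 : ordRel 2
  | le2 : ordRel 2

/-- The first-order language with three binary relation symbols `≤`, `≤₁`, `≤₂`. -/
def ordLang : FirstOrder.Language := ⟨fun _ => Empty, ordRel⟩

/-- The `ordLang`-structure on the set of ordinals below `β`, interpreting the three
relation symbols by `≤` and the given relations `le1`, `le2`. -/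
def segStr (le1 le2 : Ordinal → Ordinal → Prop) (β : Ordinal) :
    ordLang.Structure {x : Ordinal // x < β} where
  funMap := fun f => Empty.elim f
  RelMap
    | .le => fun v => (v 0).1 ≤ (v 1).1
    | .le1 => fun v => le1 (v 0).1 (v 1).1
    | .le2 => fun v => le2 (v 0).1 (v 1).1

/-- Σ₁-formulas: a block of existential quantifiers applied to a quantifier-free formula. -/
inductive IsSigma1 {L : FirstOrder.Language} {α : Type} :
    {n : ℕ} → L.BoundedFormula α n → Prop
  | of_isQF {n} {φ : L.BoundedFormula α n} (h : φ.IsQF) : IsSigma1 φ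
  | ex {n} {φ : L.BoundedFormula α (n + 1)} (h : IsSigma1 φ) : IsSigma1 φ.ex

/-- Π₁-formulas: a block of universal quantifiers applied to a quantifier-free formula. -/
inductive IsPi1 {L : FirstOrder.Language} {α : Type} :
    {n : ℕ} → L.BoundedFormula α n → Prop
  | of_isQF {n} {φ : L.BoundedFormula α n} (h : φ.IsQF) : IsPi1 φ
  | all {n} {φ : L.BoundedFormula α (n + 1)} (h : IsPi1 φ) : IsPi1 φ.all

/-- Σ₂-formulas: a block of existential quantifiers applied to a Π₁-formula. -/
inductive IsSigma2 {L : FirstOrder.Language} {α : Type} :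
    {n : ℕ} → L.BoundedFormula α n → Prop
  | of_isPi1 {n} {φ : L.BoundedFormula α n} (h : IsPi1 φ) : IsSigma2 φ
  | ex {n} {φ : L.BoundedFormula α (n + 1)} (h : IsSigma2 φ) : IsSigma2 φ.ex

/-- Realization of a formula with `k` parameters in the segment structure below `β`. -/
def RealizeIn (le1 le2 : Ordinal → Ordinal → Prop) (β : Ordinal) {k : ℕ}
    (φ : ordLang.Formula (Fin k)) (v : Fin k → {x : Ordinal // x < β}) : Prop :=
  letI := segStr le1 le2 β
  φ.Realize v

/-- `a ≤ b` and the segment below `a` is an elementary substructure of the segment below `b`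
with respect to the class `C` of formulas (with parameters from below `a`). -/
def ElemSub (C : ∀ k : ℕ, ordLang.Formula (Fin k) → Prop)
    (le1 le2 : Ordinal → Ordinal → Prop) (a b : Ordinal) : Prop :=
  ∃ hab : a ≤ b,
    ∀ (k : ℕ) (φ : ordLang.Formula (Fin k)), C k φ →
      ∀ v : Fin k → {x : Ordinal // x < a},
        RealizeIn le1 le2 a φ v ↔
          RealizeIn le1 le2 b φ (fun j => ⟨(v j).1, lt_of_lt_of_le (v j).2 hab⟩)

/-- The pair of relations `le1`, `le2` satisfies the simultaneous recursive definition of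
`≤₁` and `≤₂` on the ordinals: `α ≤ᵢ β` iff `α ≤ β` and the segment below `α` is a
Σᵢ-elementary substructure of the segment below `β`. -/
def IsR2Pair (le1 le2 : Ordinal → Ordinal → Prop) : Prop :=
  (∀ a b, le1 a b ↔ ElemSub (fun _ φ => IsSigma1 φ) le1 le2 a b) ∧
  (∀ a b, le2 a b ↔ ElemSub (fun _ φ => IsSigma2 φ) le1 le2 a b)

/-- The strict part of `≤₁`. -/
def Lt1 (le1 : Ordinal → Ordinal → Prop) (a b : Ordinal) : Prop := le1 a b ∧ a ≠ b

/-- The strict part of `≤₂`. -/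
def Lt2 (le2 : Ordinal → Ordinal → Prop) (a b : Ordinal) : Prop := le2 a b ∧ a ≠ b

/-- `1^∞`: the least ordinal `ν` such that below `ν` there are `<₂`-chains of every finite
length. -/
noncomputable def OneInfty (le2 : Ordinal → Ordinal → Prop) : Ordinal :=
  sInf {ν : Ordinal | ∀ n : ℕ, ∃ β : Fin n → Ordinal,
    (∀ i, β i < ν) ∧
    ∀ (i : ℕ) (hi : i + 1 < n), Lt2 le2 (β ⟨i, Nat.lt_of_succ_lt hi⟩) (β ⟨i + 1, hi⟩)}

/-- A respecting forest of order 2: a finite structure with a linear order `≤₀` and partial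
orders `≤₁`, `≤₂` which are forests, with `≤₂ ⊆ ≤₁ ⊆ ≤₀`, and `≤ᵢ₊₁` respecting `≤ᵢ`. -/
structure RForest where
  P : Type
  [fintypeP : Fintype P]
  le0 : P → P → Prop
  le1 : P → P → Prop
  le2 : P → P → Prop
  le0_refl : ∀ p, le0 p p
  le0_trans : ∀ p q r, le0 p q → le0 q r → le0 p r
  le0_antisymm : ∀ p q, le0 p q → le0 q p → p = q
  le0_total : ∀ p q, le0 p q ∨ le0 q p
  le1_refl : ∀ p, le1 p p
  le1_trans : ∀ p q r, le1 p q → le1 q r → le1 p r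
  le1_antisymm : ∀ p q, le1 p q → le1 q p → p = q
  le2_refl : ∀ p, le2 p p
  le2_trans : ∀ p q r, le2 p q → le2 q r → le2 p r
  le2_antisymm : ∀ p q, le2 p q → le2 q p → p = q
  le2_sub_le1 : ∀ p q, le2 p q → le1 p q
  le1_sub_le0 : ∀ p q, le1 p q → le0 p q
  forest1 : ∀ p q r, le1 q p → le1 r p → le1 q r ∨ le1 r q
  forest2 : ∀ p q r, le2 q p → le2 r p → le2 q r ∨ le2 r q
  respects1 : ∀ p q r, le0 p q → le0 q r → le1 p r → le1 p q
  respects2 : ∀ p q r, le1 p q → le1 q r → le2 p r → le2 p q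

attribute [instance] RForest.fintypeP

/-- The finite set `X` of ordinals, with the relations induced from `ℛ₂`, is isomorphic to the
respecting forest `F`. -/
def Realizes (le1 le2 : Ordinal → Ordinal → Prop) (F : RForest) (X : Finset Ordinal) : Prop :=
  ∃ e : F.P ≃ {x // x ∈ X}, ∀ p q : F.P,
    (F.le0 p q ↔ ((e p : Ordinal) ≤ (e q : Ordinal))) ∧
    (F.le1 p q ↔ le1 (e p : Ordinal) (e q : Ordinal)) ∧
    (F.le2 p q ↔ le2 (e p : Ordinal) (e q : Ordinal))

/-- Pointwise comparison of two finite sets of ordinals via their increasing enumerations. -/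
def pwLE (X Y : Finset Ordinal) : Prop :=
  ∃ h : X.card = Y.card, ∀ i : Fin X.card,
    ((X.orderIsoOfFin rfl i : {x // x ∈ X}) : Ordinal) ≤
      ((Y.orderIsoOfFin h.symm i : {x // x ∈ Y}) : Ordinal)

/-- `X` is the isominimal realization of the respecting forest `F` in `ℛ₂`: it is isomorphic
to `F` and pointwise minimal among all finite substructures of `ℛ₂` isomorphic to `F`. -/
def IsIsominimalRealization (le1 le2 : Ordinal → Ordinal → Prop) (F : RForest)
    (X : Finset Ordinal) : Prop :=
  Realizes le1 le2 F X ∧ ∀ Y : Finset Ordinal, Realizes le1 le2 F Y → pwLE X Y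

/-- A covering of the respecting forest `F` into `ℛ₂`. -/
def IsCovering (le1 le2 : Ordinal → Ordinal → Prop) (F : RForest)
    (c : F.P → Ordinal) : Prop :=
  (∀ p q, F.le0 p q ↔ c p ≤ c q) ∧
  (∀ p q, F.le1 p q → le1 (c p) (c q)) ∧
  (∀ p q, F.le2 p q → le2 (c p) (c q))


/-- A covering of the respecting forest `F` into the respecting forest `G`. -/
def ForestCovering (F G : RForest) (f : F.P → G.P) : Prop :=
  (∀ p q, F.le0 p q ↔ G.le0 (f p) (f q)) ∧
  (∀ p q, F.le1 p q → G.le1 (f p) (f q)) ∧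
  (∀ p q, F.le2 p q → G.le2 (f p) (f q))

/-- Type synonym for the segment below `β`. -/
def Seg (_ _ : Ordinal → Ordinal → Prop) (β : Ordinal) := {x : Ordinal // x < β}

instance segInst (le1 le2 : Ordinal → Ordinal → Prop) (β : Ordinal) :
    ordLang.Structure (Seg le1 le2 β) := segStr le1 le2 β

/-- Inclusion of segments as an embedding. -/
def segIncl (le1 le2 : Ordinal → Ordinal → Prop) {a b : Ordinal} (hab : a ≤ b) :
    FirstOrder.Language.Embedding ordLang (Seg le1 le2 a) (Seg le1 le2 b) where
  toFun x := ⟨x.1, x.2.trans_le hab⟩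
  inj' := fun x y hxy => Subtype.ext (congrArg (fun z : Seg le1 le2 b => z.1) hxy)
  map_fun' := fun f => Empty.elim f
  map_rel' := by
    intro n r x
    cases r <;> exact Iff.rfl

theorem IsSigma1.isExistential {L : FirstOrder.Language} {α : Type} {n : ℕ}
    {φ : L.BoundedFormula α n} (h : IsSigma1 φ) : φ.IsExistential := by
  induction h with
  | of_isQF h => exact .of_isQF h
  | ex _ ih => exact .ex ih

theorem isSigma1_exs {L : FirstOrder.Language} {α : Type} {n : ℕ}
    {φ : L.BoundedFormula α n} (h : IsSigma1 φ) : IsSigma1 φ.exs := by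
  induction n with
  | zero => exact h
  | succ n ih => exact ih h.ex

theorem realizeIn_iff (le1 le2 : Ordinal → Ordinal → Prop) (β : Ordinal) {k : ℕ}
    (φ : ordLang.Formula (Fin k)) (v : Fin k → {x : Ordinal // x < β}) :
    RealizeIn le1 le2 β φ v ↔
      FirstOrder.Language.BoundedFormula.Realize (M := Seg le1 le2 β) φ v default := Iff.rfl

theorem real0 {L : FirstOrder.Language} {M : Type*} [L.Structure M] {k : ℕ}
    (φ : L.BoundedFormula (Fin k) 0) (v : Fin k → M) (xs xs' : Fin 0 → M)
    (hr : φ.Realize v xs) : φ.Realize v xs' := by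
  rwa [Subsingleton.elim xs' xs]

theorem realizeIn_up {le1 le2 : Ordinal → Ordinal → Prop} {a b : Ordinal} (hab : a ≤ b) {k : ℕ}
    {φ : ordLang.Formula (Fin k)} (hφ : IsSigma1 φ) {v : Fin k → {x : Ordinal // x < a}}
    (hr : RealizeIn le1 le2 a φ v) :
    RealizeIn le1 le2 b φ (fun j => ⟨(v j).1, lt_of_lt_of_le (v j).2 hab⟩) := by
  rw [realizeIn_iff] at hr ⊢
  exact real0 _ _ _ _ (hφ.isExistential.realize_embedding (segIncl le1 le2 hab) hr)

theorem sigma1_down {le1 le2 : Ordinal → Ordinal → Prop} {S : Set Ordinal} {m : Ordinal}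
    (hS : ∀ x < m, ∃ b ∈ S, x < b) (hm : ∀ b ∈ S, b ≤ m) {k n : ℕ}
    {φ : ordLang.BoundedFormula (Fin k) n} (hφ : IsSigma1 φ) :
    ∀ (b₀ : Ordinal) (hb₀ : b₀ ∈ S) (v : Fin k → Seg le1 le2 b₀) (xs : Fin n → Seg le1 le2 b₀),
      φ.Realize (segIncl le1 le2 (hm b₀ hb₀) ∘ v) (segIncl le1 le2 (hm b₀ hb₀) ∘ xs) →
      ∃ b ∈ S, ∃ hb : b₀ ≤ b,
        φ.Realize (segIncl le1 le2 hb ∘ v) (segIncl le1 le2 hb ∘ xs) := by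
  induction hφ with
  | of_isQF h =>
    intro b₀ hb₀ v xs hr
    refine ⟨b₀, hb₀, le_rfl, ?_⟩
    rw [h.realize_embedding] at hr ⊢
    exact hr
  | ex _ ih =>
    intro b₀ hb₀ v xs hr
    rw [FirstOrder.Language.BoundedFormula.realize_ex] at hr
    obtain ⟨a, ha⟩ := hr
    obtain ⟨b₁, hb₁, hlt⟩ := hS a.1 a.2
    have hmax : max b₀ b₁ ∈ S := by
      rcases max_choice b₀ b₁ with h | h <;> rw [h] <;> assumption
    have hle : b₀ ≤ max b₀ b₁ := le_max_left _ _
    let a' : Seg le1 le2 (max b₀ b₁) := ⟨a.1, hlt.trans_le (le_max_right _ _)⟩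
    obtain ⟨b, hb, hbb, hr⟩ := ih (max b₀ b₁) hmax (segIncl le1 le2 hle ∘ v)
      (Fin.snoc (segIncl le1 le2 hle ∘ xs) a') (by
        rw [Fin.comp_snoc]
        exact ha)
    refine ⟨b, hb, hle.trans hbb, ?_⟩
    rw [FirstOrder.Language.BoundedFormula.realize_ex]
    refine ⟨segIncl le1 le2 hbb a', ?_⟩
    rw [Fin.comp_snoc] at hr
    exact hr

theorem isQF_iInf {L : FirstOrder.Language} {α β : Type} {n : ℕ} [Finite β]
    {f : β → L.BoundedFormula α n} (hf : ∀ b, (f b).IsQF) :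
    (FirstOrder.Language.BoundedFormula.iInf f).IsQF := by
  have key : ∀ l : List β, ((l.map f).foldr (· ⊓ ·) ⊤).IsQF := by
    intro l
    induction l with
    | nil => exact FirstOrder.Language.BoundedFormula.IsQF.top
    | cons a l ih => exact (hf a).inf ih
  exact key _

/-- The formula expressing `x_i <₂ x_j`. -/
def lt2Form {n : ℕ} (i j : Fin n) : ordLang.BoundedFormula (Fin 0) n :=
  FirstOrder.Language.BoundedFormula.rel (L := ordLang) (l := 2) (R := ordRel.le2)
      ![FirstOrder.Language.Term.var (Sum.inr i), FirstOrder.Language.Term.var (Sum.inr j)] ⊓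
    (FirstOrder.Language.Term.bdEqual (FirstOrder.Language.Term.var (Sum.inr i))
      (FirstOrder.Language.Term.var (Sum.inr j))).not

theorem lt2Form_isQF {n : ℕ} (i j : Fin n) : (lt2Form i j).IsQF :=
  (FirstOrder.Language.BoundedFormula.IsAtomic.rel _ _).isQF.inf
    (FirstOrder.Language.BoundedFormula.IsAtomic.equal _ _).isQF.not

theorem realize_lt2Form (le1 le2 : Ordinal → Ordinal → Prop) (β : Ordinal) {n : ℕ} (i j : Fin n)
    (v : Fin 0 → Seg le1 le2 β) (xs : Fin n → Seg le1 le2 β) :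
    (lt2Form i j).Realize v xs ↔ Lt2 le2 (xs i).1 (xs j).1 := by
  unfold lt2Form Lt2
  rw [FirstOrder.Language.BoundedFormula.realize_inf,
    FirstOrder.Language.BoundedFormula.realize_not,
    FirstOrder.Language.BoundedFormula.realize_bdEqual]
  refine and_congr Iff.rfl (not_congr ?_)
  exact Subtype.ext_iff

/-- The sentence expressing existence of a `<₂`-chain of length `n`. -/
noncomputable def chainForm (n : ℕ) : ordLang.Formula (Fin 0) :=
  (FirstOrder.Language.BoundedFormula.iInf (fun i : {i : Fin n // i.1 + 1 < n} =>
    lt2Form i.1 ⟨i.1.1 + 1, i.2⟩)).exs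

theorem chainForm_sigma1 (n : ℕ) : IsSigma1 (chainForm n) :=
  isSigma1_exs (.of_isQF (isQF_iInf fun _ => lt2Form_isQF _ _))

theorem realize_chainForm (le1 le2 : Ordinal → Ordinal → Prop) (ν : Ordinal) (n : ℕ)
    (v : Fin 0 → {x : Ordinal // x < ν}) :
    RealizeIn le1 le2 ν (chainForm n) v ↔ ∃ β : Fin n → Ordinal, (∀ i, β i < ν) ∧
    ∀ (i : ℕ) (hi : i + 1 < n), Lt2 le2 (β ⟨i, Nat.lt_of_succ_lt hi⟩) (β ⟨i + 1, hi⟩) := by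
  have h1 : RealizeIn le1 le2 ν (chainForm n) v ↔
      ∃ xs : Fin n → Seg le1 le2 ν, ∀ i : {i : Fin n // i.1 + 1 < n},
        Lt2 le2 (xs i.1).1 (xs ⟨i.1.1 + 1, i.2⟩).1 := by
    have h2 := FirstOrder.Language.BoundedFormula.realize_exs (M := Seg le1 le2 ν)
      (φ := FirstOrder.Language.BoundedFormula.iInf (fun i : {i : Fin n // i.1 + 1 < n} =>
        lt2Form i.1 ⟨i.1.1 + 1, i.2⟩)) (v := v)
    refine Iff.trans h2 (exists_congr fun xs => ?_)
    refine Iff.trans (FirstOrder.Language.BoundedFormula.realize_iInf (M := Seg le1 le2 ν)) ?_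
    exact forall_congr' fun i => realize_lt2Form _ _ _ _ _ _ _
  rw [h1]
  constructor
  · rintro ⟨xs, hxs⟩
    exact ⟨fun i => (xs i).1, fun i => (xs i).2, fun i hi => hxs ⟨⟨i, Nat.lt_of_succ_lt hi⟩, hi⟩⟩
  · rintro ⟨β, hβ, hc⟩
    exact ⟨fun i => ⟨β i, hβ i⟩, fun i => hc i.1.1 i.2⟩

theorem stmt9 (le1 le2 : Ordinal → Ordinal → Prop) (h : IsR2Pair le1 le2)
    (α : Ordinal) (hα : α < OneInfty le2) :
    ∃ m : Ordinal, (le1 α m ∧ ∀ β, le1 α β → β ≤ m) ∧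
      ∀ β, le1 α β ↔ α ≤ β ∧ β ≤ m := by
  obtain ⟨h1, -⟩ := h
  have hrefl : le1 α α := (h1 α α).2 ⟨le_rfl, fun k φ _ v => Iff.rfl⟩
  have hle : ∀ β, le1 α β → α ≤ β := fun β hβ => ((h1 α β).1 hβ).1
  have hint : ∀ γ β, α ≤ γ → γ ≤ β → le1 α β → le1 α γ := by
    intro γ β hαγ hγβ hβ
    obtain ⟨hab, he⟩ := (h1 α β).1 hβ
    refine (h1 α γ).2 ⟨hαγ, fun k φ hφ v => ⟨realizeIn_up hαγ hφ, fun hr => ?_⟩⟩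
    exact (he k φ hφ v).2 (realizeIn_up hγβ hφ hr)
  have hbdd : BddAbove {β | le1 α β} := by
    by_contra hnb
    have hne : {ν : Ordinal | ∀ n : ℕ, ∃ β : Fin n → Ordinal, (∀ i, β i < ν) ∧
        ∀ (i : ℕ) (hi : i + 1 < n),
          Lt2 le2 (β ⟨i, Nat.lt_of_succ_lt hi⟩) (β ⟨i + 1, hi⟩)}.Nonempty := by
      by_contra hemp
      rw [Set.not_nonempty_iff_eq_empty] at hemp
      rw [OneInfty, hemp, Ordinal.sInf_empty] at hα
      exact absurd hα (not_lt.2 (zero_le (a := α)))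
    obtain ⟨ν, hν⟩ := hne
    rw [not_bddAbove_iff] at hnb
    obtain ⟨β, hβ, hνβ⟩ := hnb ν
    obtain ⟨hab, he⟩ := (h1 α β).1 hβ
    refine absurd hα (not_lt.2 (csInf_le' ?_))
    intro n
    have hr := (realize_chainForm le1 le2 β n (fun j => Fin.elim0 j)).2 (by
      obtain ⟨c, hc, hc'⟩ := hν n
      exact ⟨c, fun i => (hc i).trans hνβ, hc'⟩)
    refine (realize_chainForm le1 le2 α n (fun j => Fin.elim0 j)).1
      ((he 0 _ (chainForm_sigma1 n) (fun j => Fin.elim0 j)).2 ?_)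
    convert hr
  have hm : le1 α (sSup {β | le1 α β}) := by
    have hub : ∀ b ∈ {β | le1 α β}, b ≤ sSup {β | le1 α β} := fun b hb => le_csSup hbdd hb
    refine (h1 _ _).2 ⟨hub α hrefl, fun k φ hφ v => ⟨realizeIn_up (hub α hrefl) hφ, fun hr => ?_⟩⟩
    obtain ⟨b, hb, hbb, hr'⟩ := sigma1_down (le1 := le1) (le2 := le2)
      (fun x hx => exists_lt_of_lt_csSup ⟨α, hrefl⟩ hx) hub hφ α hrefl v default (by
        rw [realizeIn_iff] at hr
        exact real0 _ _ _ _ hr)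
    obtain ⟨hab, he⟩ := (h1 α b).1 hb
    refine (he k φ hφ v).2 ?_
    rw [realizeIn_iff]
    exact real0 _ _ _ _ hr'
  refine ⟨_, ⟨hm, fun β hβ => le_csSup hbdd hβ⟩, fun β => ⟨fun hβ => ⟨hle β hβ, le_csSup hbdd hβ⟩,
    fun hβ => hint _ _ hβ.1 hβ.2 hm⟩⟩
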